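/- Let Λ be an artin algebra, P the class of finitely generated modules of finite projective dimension, assumed contravariantly finite, and E the direct sum of the indecomposable Ext-injective modules in P. Then E is isomorphic to the direct sum of the minimal right P-approximations of the indecomposable injective Λ-modules (up to multiplicity of summands, i.e., add E = add(⊕_j A_j) where f_j: A_j → I_j are the minimal approximations). -/

import Mathlib

open CategoryTheory

universe u

/-- The `n`-th Ext group of `A`-modules `M`, `N`. -/
noncomputable abbrev ext {A : Type u} [Ring A] (M N : ModuleCat.{u} A) (n : ℕ) : Type u :=
  ((Ext ℤ (ModuleCat.{u} A) n).obj (Opposite.op M)).obj N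

/-- `Ext^i(N, M) = 0` for all `i > 0`. -/
def ExtVanish {A : Type u} [Ring A] (N M : ModuleCat.{u} A) : Prop :=
  ∀ i, 0 < i → Subsingleton (ext N M i)

/-- `M` has projective dimension at most `n`, i.e. `Ext^i(M, -) = 0` for `i > n`. -/
def pdLE {A : Type u} [Ring A] (M : ModuleCat.{u} A) (n : ℕ) : Prop :=
  ∀ i, n < i → ∀ N : ModuleCat.{u} A, Subsingleton (ext M N i)

/-- The projective dimension of `M`, as an element of `ℕ∞` (`⊤` if infinite). -/
noncomputable def projDim {A : Type u} [Ring A] (M : ModuleCat.{u} A) : ℕ∞ :=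
  sInf {d : ℕ∞ | ∃ n : ℕ, d = n ∧ pdLE M n}

/-- Membership in `𝒫`: finitely generated of finite projective dimension. -/
def InP {A : Type u} [Ring A] (M : ModuleCat.{u} A) : Prop :=
  Module.Finite A M ∧ ∃ n, pdLE M n

/-- The finitistic dimension of `A`. -/
noncomputable def findim (A : Type u) [Ring A] : ℕ∞ :=
  sSup {d : ℕ∞ | ∃ M : ModuleCat.{u} A, InP M ∧ d = projDim M}

/-- `M` is a direct summand of `S`. -/
def IsSummand {A : Type u} [Ring A] (M S : ModuleCat.{u} A) : Prop :=
  ∃ (s : M →ₗ[A] S) (r : S →ₗ[A] M), r ∘ₗ s = LinearMap.id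

/-- `M` belongs to `add 𝒳`: `M` is a direct summand of a finite direct sum of objects of `𝒳`. -/
def InAddOf {A : Type u} [Ring A] (X : ModuleCat.{u} A → Prop) (M : ModuleCat.{u} A) : Prop :=
  ∃ (k : ℕ) (F : Fin k → ModuleCat.{u} A), (∀ i, X (F i)) ∧
    IsSummand M (ModuleCat.of A (DirectSum (Fin k) (fun i => ↥(F i))))

/-- `M` belongs to `Add T`: `M` is a direct summand of an arbitrary direct sum of copies of `T`. -/
def InAdd {A : Type u} [Ring A] (T M : ModuleCat.{u} A) : Prop :=
  ∃ ι : Type u, IsSummand M (ModuleCat.of A (DirectSum ι (fun _ => ↥T)))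

/-- `M ∈ 𝒳^⊥`: `Ext^i(N, M) = 0` for all `N ∈ 𝒳` and `i > 0`. -/
def InPerpOf {A : Type u} [Ring A] (X : ModuleCat.{u} A → Prop) (M : ModuleCat.{u} A) : Prop :=
  ∀ N, X N → ExtVanish N M

/-- `M` is Ext-injective in `𝒫`: `M ∈ 𝒫` and `Ext^1(N, M) = 0` for all `N ∈ 𝒫`. -/
def ExtInjInP {A : Type u} [Ring A] (M : ModuleCat.{u} A) : Prop :=
  InP M ∧ ∀ N : ModuleCat.{u} A, InP N → Subsingleton (ext N M 1)

/-- `M` is splitting injective in `𝒳`: every injective map `M → Y` with `Y ∈ add 𝒳` splits. -/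
def SplittingInjIn {A : Type u} [Ring A] (X : ModuleCat.{u} A → Prop)
    (M : ModuleCat.{u} A) : Prop :=
  ∀ Y : ModuleCat.{u} A, InAddOf X Y → ∀ f : M →ₗ[A] Y, Function.Injective f →
    ∃ r : Y →ₗ[A] M, r ∘ₗ f = LinearMap.id

/-- `0 → M₁ → M₂ → M₃ → 0` is a short exact sequence. -/
def ShortExact {A : Type u} [Ring A] {M₁ M₂ M₃ : ModuleCat.{u} A}
    (f : M₁ →ₗ[A] M₂) (g : M₂ →ₗ[A] M₃) : Prop :=
  Function.Injective f ∧ Function.Exact f g ∧ Function.Surjective g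

/-- `f : XM → M` is a right `𝒳`-approximation of `M`. -/
def IsRightApprox {A : Type u} [Ring A] (X : ModuleCat.{u} A → Prop)
    {XM M : ModuleCat.{u} A} (f : XM →ₗ[A] M) : Prop :=
  X XM ∧ ∀ Y : ModuleCat.{u} A, X Y → ∀ g : Y →ₗ[A] M, ∃ h : Y →ₗ[A] XM, f ∘ₗ h = g

/-- `f : XM → M` is a minimal right `𝒳`-approximation. -/
def IsMinimalRightApprox {A : Type u} [Ring A] (X : ModuleCat.{u} A → Prop)
    {XM M : ModuleCat.{u} A} (f : XM →ₗ[A] M) : Prop :=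
  IsRightApprox X f ∧ ∀ g : XM →ₗ[A] XM, f ∘ₗ g = f → Function.Bijective g

/-- `𝒳` is contravariantly finite in `mod A`. -/
def ContravariantlyFinite {A : Type u} [Ring A] (X : ModuleCat.{u} A → Prop) : Prop :=
  ∀ M : ModuleCat.{u} A, Module.Finite A M →
    ∃ (XM : ModuleCat.{u} A) (f : XM →ₗ[A] M), IsRightApprox X f

/-- `M` is an indecomposable module: nonzero, and its only idempotent endomorphisms
are `0` and the identity. -/
def Indec {A : Type u} [Ring A] (M : ModuleCat.{u} A) : Prop :=
  (¬ Subsingleton M) ∧ ∀ e : M →ₗ[A] M, e ∘ₗ e = e → e = 0 ∨ e = LinearMap.id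

/-- `L` admits a finite coresolution `0 → L → C^0 → ⋯ → C^n → 0` with all `C^i ∈ add T`. -/
def HasAddCoresolution {A : Type u} [Ring A] (T L : ModuleCat.{u} A) : Prop :=
  ∃ (C : ℕ → ModuleCat.{u} A) (d : ∀ i, C i →ₗ[A] C (i+1)) (f : L →ₗ[A] C 0),
    Function.Injective f ∧ Function.Exact f (d 0) ∧
    (∀ i, Function.Exact (d i) (d (i+1))) ∧
    (∀ i, InAddOf (fun X => X = T) (C i)) ∧
    (∃ m, ∀ i, m ≤ i → Subsingleton (C i))

/-- `T` is a tilting `A`-module. -/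
def IsTilting {A : Type u} [Ring A] (T : ModuleCat.{u} A) : Prop :=
  Module.Finite A T ∧ (∃ n, pdLE T n) ∧ ExtVanish T T ∧
    HasAddCoresolution T (ModuleCat.of A A)

/-- `𝒳` is a resolving subcategory of `mod A`. -/
def Resolving {A : Type u} [Ring A] (X : ModuleCat.{u} A → Prop) : Prop :=
  (∀ M : ModuleCat.{u} A, Module.Finite A M → Module.Projective A M → X M) ∧
  (∀ (M₁ M₂ M₃ : ModuleCat.{u} A) (f : M₁ →ₗ[A] M₂) (g : M₂ →ₗ[A] M₃),
      ShortExact f g → X M₁ → X M₃ → X M₂) ∧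
  (∀ (M₁ M₂ M₃ : ModuleCat.{u} A) (f : M₁ →ₗ[A] M₂) (g : M₂ →ₗ[A] M₃),
      ShortExact f g → X M₂ → X M₃ → X M₁)

/-- `F` is a complete irredundant family of representatives of the isomorphism classes of
indecomposable Ext-injective modules in `𝒫`. -/
def IsCompleteExtInjFamily {A : Type u} [Ring A] {ι : Type u}
    (F : ι → ModuleCat.{u} A) : Prop :=
  (∀ i, Indec (F i) ∧ ExtInjInP (F i)) ∧
  (∀ M : ModuleCat.{u} A, Indec M → ExtInjInP M → ∃ i, Nonempty (M ≃ₗ[A] F i)) ∧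
  (∀ i j, Nonempty (F i ≃ₗ[A] F j) → i = j)

/-- `I` is a complete set of pairwise non-isomorphic indecomposable injective modules. -/
def IsCompleteIndecInjFamily {A : Type u} [Ring A] {n : ℕ}
    (I : Fin n → ModuleCat.{u} A) : Prop :=
  (∀ j, Module.Finite A (I j) ∧ Module.Injective A (I j) ∧ Indec (I j)) ∧
  (∀ M : ModuleCat.{u} A, Module.Finite A M → Module.Injective A M → Indec M →
      ∃ j, Nonempty (M ≃ₗ[A] I j)) ∧
  (∀ j k, Nonempty (I j ≃ₗ[A] I k) → j = k)

/-!
A minimal right `𝒫`-approximation `A → I` of an injective module is Ext-injective: given an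
injection `A → E` with `E ∈ 𝒫`, the approximation extends to `E → I`, the extension lifts to
`E → A`, and minimality makes the composite `A → E → A` invertible. Conversely, an Ext-injective
module embeds in a finitely generated injective module, hence in a finite direct sum of the `I j`.
Lifting the components of this embedding along the approximations embeds it in a finite direct sum
of the `A j`, where it splits off. By Krull–Schmidt there are then only finitely many
indecomposable Ext-injectives, and `E` is a finite direct sum.

Over an artin algebra, finitely generated injective modules are abundant because essential
extensions of finitely generated modules are finitely generated: the elements annihilated by the
radical lie in the socle, hence in the smaller module, and the radical is nilpotent.
-/

section ExtOne

open CategoryTheory.Abelian Limits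

variable {C : Type*} [Category* C] [Abelian C]

theorem exists_shortExact_pullback {S : ShortComplex C} (hS : S.ShortExact) {X : C}
    (φ : X ⟶ S.X₃) :
    ∃ (E : C) (i : S.X₁ ⟶ E) (p : E ⟶ X) (w : i ≫ p = 0) (ψ : E ⟶ S.X₂),
      (ShortComplex.mk i p w).ShortExact ∧ i ≫ ψ = S.f ∧ p ≫ φ = ψ ≫ S.g := by
  have := hS.mono_f
  have := hS.epi_g
  let i : S.X₁ ⟶ pullback S.g φ := pullback.lift S.f 0 (by simp)
  have hi : i ≫ pullback.fst S.g φ = S.f := pullback.lift_fst ..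
  have hw : i ≫ pullback.snd S.g φ = 0 := pullback.lift_snd ..
  have : Mono i := mono_of_mono_fac hi
  refine ⟨_, i, pullback.snd S.g φ, hw, pullback.fst S.g φ, ⟨?_⟩, hi, pullback.condition.symm⟩
  refine ShortComplex.exact_of_f_is_kernel _ (KernelFork.IsLimit.ofι' _ _ fun k hk => ?_)
  have hk' : (k ≫ pullback.fst S.g φ) ≫ S.g = 0 := by
    rw [Category.assoc, pullback.condition, reassoc_of% hk, zero_comp]
  refine ⟨hS.exact.lift _ hk', pullback.hom_ext ?_ ?_⟩
  · rw [Category.assoc, hi, hS.exact.lift_f]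
  · rw [Category.assoc, hw, comp_zero, hk]

theorem exists_shortExact_extClass_eq [HasExt C] [EnoughInjectives C] {X Y : C}
    (e : Abelian.Ext X Y 1) :
    ∃ (E : C) (i : Y ⟶ E) (p : E ⟶ X) (w : i ≫ p = 0) (h : (ShortComplex.mk i p w).ShortExact),
      h.extClass = e := by
  let S : ShortComplex C := .mk (Injective.ι Y) (cokernel.π (Injective.ι Y)) (cokernel.condition _)
  have hS : S.ShortExact :=
    { exact := ShortComplex.exact_of_g_is_cokernel _ (cokernelIsCokernel _) }
  obtain ⟨a, rfl⟩ := Abelian.Ext.covariant_sequence_exact₁ X hS e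
    (Abelian.Ext.eq_zero_of_injective (I := Injective.under Y) _) (n₀ := 0) rfl
  obtain ⟨φ, rfl⟩ := (Abelian.Ext.mk₀_bijective _ _).2 a
  obtain ⟨E, i, p, w, ψ, h, hi, hp⟩ := exists_shortExact_pullback hS φ
  refine ⟨E, i, p, w, h, ?_⟩
  exact (Abelian.Ext.comp_mk₀_id _).symm.trans
    (h.extClass_naturality hS ⟨𝟙 Y, ψ, φ, by simp [hi, S], hp.symm⟩)

theorem extClass_eq_zero_iff [HasExt C] {S : ShortComplex C} (hS : S.ShortExact) :
    hS.extClass = 0 ↔ ∃ r : S.X₂ ⟶ S.X₁, S.f ≫ r = 𝟙 S.X₁ := by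
  constructor
  · intro h
    obtain ⟨a, ha⟩ := Abelian.Ext.contravariant_sequence_exact₁ hS S.X₁
      (Abelian.Ext.mk₀ (𝟙 S.X₁)) (n₁ := 1) rfl (by simp [h])
    obtain ⟨r, rfl⟩ := (Abelian.Ext.mk₀_bijective _ _).2 a
    exact ⟨r, (Abelian.Ext.mk₀_bijective _ _).1 (by rwa [Abelian.Ext.mk₀_comp_mk₀] at ha)⟩
  · rintro ⟨r, hr⟩
    rw [← Abelian.Ext.comp_mk₀_id hS.extClass, ← hr, ← Abelian.Ext.mk₀_comp_mk₀]
    exact hS.extClass_comp_assoc _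

end ExtOne

section FiniteProjectiveDimension

variable {A : Type u} [Ring A] {M N : ModuleCat.{u} A}

open CategoryTheory.Abelian in
theorem subsingleton_ext_succ_iff (n : ℕ) :
    Subsingleton (ext M N (n + 1)) ↔ Subsingleton (Abelian.Ext.{u} M N (n + 1)) := by
  let P := ProjectiveResolution.of M
  have h_ext : Subsingleton (ext M N (n + 1)) ↔
      ∀ f : P.complex.X (n + 1) ⟶ N, P.complex.d (n + 2) (n + 1) ≫ f = 0 →
        ∃ g : P.complex.X n ⟶ N, P.complex.d (n + 1) n ≫ g = f := by
    rw [← ModuleCat.isZero_iff_subsingleton, (P.isoExt (n + 1) N).isZero_iff,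
      ← HomologicalComplex.exactAt_iff_isZero_homology,
      HomologicalComplex.exactAt_iff' _ n (n + 1) (n + 2) (by simp) (by simp),
      ShortComplex.moduleCat_exact_iff]
    rfl
  rw [h_ext]
  constructor
  · intro h
    refine subsingleton_of_forall_eq 0 fun α => ?_
    obtain ⟨f, hf, rfl⟩ := P.extMk_surjective α (n + 2) rfl
    exact (P.extMk_eq_zero_iff f _ rfl hf n rfl).2 (h f hf)
  · intro h f hf
    exact (P.extMk_eq_zero_iff f _ rfl hf n rfl).1 (Subsingleton.elim _ _)

theorem pdLE_iff_hasProjectiveDimensionLE (n : ℕ) : pdLE M n ↔ HasProjectiveDimensionLE M n := by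
  rw [HasProjectiveDimensionLE, hasProjectiveDimensionLT_iff.{u}]
  constructor
  · intro h i hi Y e
    obtain ⟨j, rfl⟩ : ∃ j, i = j + 1 := ⟨i - 1, by lia⟩
    have := (subsingleton_ext_succ_iff j).1 (h _ hi Y)
    exact Subsingleton.elim _ _
  · intro h i hi Y
    obtain ⟨j, rfl⟩ : ∃ j, i = j + 1 := ⟨i - 1, by lia⟩
    exact (subsingleton_ext_succ_iff j).2 (subsingleton_of_forall_eq 0 fun e => h _ hi e)

theorem inP_iff : InP M ↔ Module.Finite A M ∧ ∃ n, HasProjectiveDimensionLT M n := by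
  refine and_congr_right fun _ => ⟨fun ⟨n, hn⟩ => ⟨n + 1, ?_⟩, fun ⟨n, hn⟩ => ⟨n, ?_⟩⟩
  · exact (pdLE_iff_hasProjectiveDimensionLE n).1 hn
  · exact (pdLE_iff_hasProjectiveDimensionLE n).2 (hasProjectiveDimensionLT_of_ge M n _ n.le_succ)

theorem isSummand_iff_nonempty_retract : IsSummand M N ↔ Nonempty (Retract M N) :=
  ⟨fun ⟨s, r, h⟩ => ⟨⟨ModuleCat.ofHom s, ModuleCat.ofHom r, ModuleCat.hom_ext h⟩⟩,
    fun ⟨ρ⟩ => ⟨ρ.i.hom, ρ.r.hom, congrArg ModuleCat.Hom.hom ρ.retract⟩⟩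

theorem IsSummand.of_equiv (e : M ≃ₗ[A] N) : IsSummand M N :=
  ⟨e, e.symm, e.symm_comp⟩

theorem IsSummand.finite (h : IsSummand M N) [Module.Finite A N] : Module.Finite A M := by
  obtain ⟨s, r, hrs⟩ := h
  exact .of_surjective r (LinearMap.surjective_of_comp_eq_id _ _ hrs)

theorem IsSummand.injective (h : IsSummand M N) [Module.Injective A N] : Module.Injective A M := by
  obtain ⟨ρ⟩ := isSummand_iff_nonempty_retract.1 h
  rw [Module.injective_iff_injective_object] at *
  exact ρ.injective

theorem IsSummand.inP (h : IsSummand M N) (hN : InP N) : InP M := by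
  obtain ⟨_, n, _⟩ := inP_iff.1 hN
  obtain ⟨ρ⟩ := isSummand_iff_nonempty_retract.1 h
  exact inP_iff.2 ⟨h.finite, n, ρ.hasProjectiveDimensionLT n⟩

theorem inP_of_shortExact₂ {S : ShortComplex (ModuleCat.{u} A)} (hS : S.ShortExact)
    (h₁ : InP S.X₁) (h₃ : InP S.X₃) : InP S.X₂ := by
  obtain ⟨_, n₁, _⟩ := inP_iff.1 h₁
  obtain ⟨_, n₃, _⟩ := inP_iff.1 h₃
  have h_fin : Module.Finite A S.X₂ :=
    .of_exact ((ShortComplex.ShortExact.moduleCat_exact_iff_function_exact S).1 hS.exact)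
      hS.moduleCat_surjective_g
  exact inP_iff.2 ⟨h_fin, max n₁ n₃, hS.hasProjectiveDimensionLT_X₂ _
    (hasProjectiveDimensionLT_of_ge _ n₁ _ (le_max_left ..))
    (hasProjectiveDimensionLT_of_ge _ n₃ _ (le_max_right ..))⟩

theorem inP_of_shortExact₃ {S : ShortComplex (ModuleCat.{u} A)} (hS : S.ShortExact)
    (h₁ : InP S.X₁) (h₂ : InP S.X₂) : InP S.X₃ := by
  obtain ⟨-, n₁, _⟩ := inP_iff.1 h₁
  obtain ⟨_, n₂, _⟩ := inP_iff.1 h₂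
  have h_fin : Module.Finite A S.X₃ := .of_surjective S.g.hom hS.moduleCat_surjective_g
  exact inP_iff.2 ⟨h_fin, max n₁ n₂ + 1, hS.hasProjectiveDimensionLT_X₃ _
    (hasProjectiveDimensionLT_of_ge _ n₁ _ (le_max_left ..))
    (hasProjectiveDimensionLT_of_ge _ n₂ _ (by lia))⟩

theorem inP_of_subsingleton [Subsingleton M] : InP M :=
  inP_iff.2 ⟨inferInstance, 0, (ModuleCat.isZero_of_subsingleton M).hasProjectiveDimensionLT_zero⟩

theorem InP.prod (hM : InP M) (hN : InP N) : InP (ModuleCat.of A (M × N)) :=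
  inP_of_shortExact₂ (S := ModuleCat.shortComplexOfCompEqZero (LinearMap.inl A M N)
    (LinearMap.snd A M N) (LinearMap.snd_comp_inl ..))
    (ModuleCat.shortComplex_shortExact _ .inl_snd LinearMap.inl_injective LinearMap.snd_surjective)
    hM hN

theorem InP.pi {κ : Type} [Finite κ] {Y : κ → ModuleCat.{u} A} (hY : ∀ k, InP (Y k)) :
    InP (ModuleCat.of A (∀ k, Y k)) :=
  Module.pi_induction' A (fun N _ _ => InP (ModuleCat.of A N)) (fun N _ _ => InP (ModuleCat.of A N))
    (fun e => (IsSummand.of_equiv e.symm).inP) (fun e => (IsSummand.of_equiv e.symm).inP)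
    inP_of_subsingleton .prod (fun k => Y k) hY

end FiniteProjectiveDimension

section ExtInjective

variable {A : Type u} [Ring A] {M N : ModuleCat.{u} A}

theorem extInjInP_iff : ExtInjInP M ↔ InP M ∧ ∀ Y : ModuleCat.{u} A, InP Y →
    ∀ f : M →ₗ[A] Y, Function.Injective f → ∃ r : Y →ₗ[A] M, r ∘ₗ f = LinearMap.id := by
  refine and_congr_right fun hM => ⟨fun h Y hY f hf => ?_, fun h N hN => ?_⟩
  · let S := ModuleCat.shortComplexOfCompEqZero f (LinearMap.range f).mkQ
      (LinearMap.range_mkQ_comp f)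
    have hS : S.ShortExact := ModuleCat.shortComplex_shortExact S
      (LinearMap.exact_map_mkQ_range f) hf (Submodule.mkQ_surjective _)
    have := (subsingleton_ext_succ_iff 0).1 (h S.X₃ (inP_of_shortExact₃ hS hM hY))
    obtain ⟨r, hr⟩ := (extClass_eq_zero_iff hS).1 (Subsingleton.elim _ _)
    exact ⟨r.hom, congrArg ModuleCat.Hom.hom hr⟩
  · refine (subsingleton_ext_succ_iff 0).2 (subsingleton_of_forall_eq 0 fun e => ?_)
    obtain ⟨E, i, p, w, hS, rfl⟩ := exists_shortExact_extClass_eq e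
    obtain ⟨r, hr⟩ := h E (inP_of_shortExact₂ hS hM hN) i.hom hS.moduleCat_injective_f
    exact (extClass_eq_zero_iff hS).2 ⟨ModuleCat.ofHom r, ModuleCat.hom_ext hr⟩

theorem IsSummand.extInjInP (h : IsSummand M N) (hN : ExtInjInP N) : ExtInjInP M := by
  refine ⟨h.inP hN.1, fun K hK => ?_⟩
  obtain ⟨ρ⟩ := isSummand_iff_nonempty_retract.1 h
  let σ := ρ.map ((Ext ℤ (ModuleCat.{u} A) 1).obj (.op K))
  have := hN.2 K hK
  exact Function.Injective.subsingleton ((ModuleCat.mono_iff_injective σ.i).1 inferInstance)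

theorem IsMinimalRightApprox.exists_retraction {X : ModuleCat.{u} A → Prop}
    {XM I E : ModuleCat.{u} A} [Module.Injective A I] {f : XM →ₗ[A] I}
    (hf : IsMinimalRightApprox X f) (hE : X E) {i : XM →ₗ[A] E} (hi : Function.Injective i) :
    ∃ r : E →ₗ[A] XM, r ∘ₗ i = LinearMap.id := by
  obtain ⟨f', hf'⟩ := Module.Injective.out i hi f
  obtain ⟨h, hh⟩ := hf.1.2 E hE f'
  have h_bij : Function.Bijective (h ∘ₗ i) := by
    refine hf.2 _ (LinearMap.ext fun x => ?_)
    rw [← hf' x, ← hh]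
    rfl
  let e := LinearEquiv.ofBijective _ h_bij
  exact ⟨e.symm.toLinearMap ∘ₗ h, LinearMap.ext e.symm_apply_apply⟩

theorem IsMinimalRightApprox.extInjInP {XM I : ModuleCat.{u} A} [Module.Injective A I]
    {f : XM →ₗ[A] I} (hf : IsMinimalRightApprox InP f) : ExtInjInP XM :=
  extInjInP_iff.2 ⟨hf.1.1, fun _ hY _ hi => hf.exists_retraction hY hi⟩

end ExtInjective

section AdditiveClosure

variable {A : Type u} [Ring A] {X Z : ModuleCat.{u} A → Prop} {M N K L : ModuleCat.{u} A}

/-- The finite sums of linear maps `M → N` that factor through a module of the class `X`. These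
maps form the ideal of morphisms attached to `add X`: a module is in `add X` if and only if its
identity is in the ideal (`inAddOf_iff`). -/
def factorsThroughAdd (X : ModuleCat.{u} A → Prop) (M N : ModuleCat.{u} A) :
    AddSubmonoid (M →ₗ[A] N) :=
  .closure {φ | ∃ Y, X Y ∧ ∃ (s : M →ₗ[A] Y) (r : Y →ₗ[A] N), r ∘ₗ s = φ}

theorem comp_mem_factorsThroughAdd {Y : ModuleCat.{u} A} (hY : X Y) (s : M →ₗ[A] Y)
    (r : Y →ₗ[A] N) : r ∘ₗ s ∈ factorsThroughAdd X M N :=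
  AddSubmonoid.subset_closure ⟨Y, hY, s, r, rfl⟩

theorem comp_comp_mem_factorsThroughAdd (s : M →ₗ[A] K) (r : L →ₗ[A] N) {φ : K →ₗ[A] L}
    (hφ : φ ∈ factorsThroughAdd X K L) : r ∘ₗ φ ∘ₗ s ∈ factorsThroughAdd X M N := by
  induction hφ using AddSubmonoid.closure_induction with
  | mem φ h =>
    obtain ⟨Y, hY, s', r', rfl⟩ := h
    exact comp_mem_factorsThroughAdd hY (s' ∘ₗ s) (r ∘ₗ r')
  | zero => simp
  | add φ ψ _ _ hφ hψ =>
    rw [LinearMap.add_comp, LinearMap.comp_add]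
    exact add_mem hφ hψ

theorem id_mem_factorsThroughAdd_of_directSum {κ : Type*} [Finite κ] {Y : κ → ModuleCat.{u} A}
    (hY : ∀ k, X (Y k)) {s : M →ₗ[A] DirectSum κ fun k => Y k}
    {r : (DirectSum κ fun k => Y k) →ₗ[A] M} (h : r ∘ₗ s = LinearMap.id) :
    LinearMap.id ∈ factorsThroughAdd X M M := by
  classical
  have := Fintype.ofFinite κ
  have h_id : ∑ k, (r ∘ₗ DirectSum.lof A κ _ k) ∘ₗ (DirectSum.component A κ _ k ∘ₗ s) =
      LinearMap.id := by
    ext x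
    have h_sum := DirectSum.sum_univ_of (s x)
    simp only [LinearMap.sum_apply, LinearMap.comp_apply, ← map_sum, DirectSum.lof_eq_of,
      DirectSum.apply_eq_component A] at h_sum ⊢
    rw [h_sum]
    exact LinearMap.congr_fun h x
  exact h_id ▸ sum_mem fun k _ => comp_mem_factorsThroughAdd (hY k) _ _

theorem inAddOf_iff : InAddOf X M ↔ LinearMap.id ∈ factorsThroughAdd X M M := by
  constructor
  · rintro ⟨k, Y, hY, s, r, hrs⟩
    exact id_mem_factorsThroughAdd_of_directSum hY hrs
  · intro h
    obtain ⟨l, hl, h_sum⟩ := AddSubmonoid.exists_list_of_mem_closure h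
    choose Y hY s r hrs using fun i : Fin l.length => hl _ (l.get_mem i)
    have h_id : ∑ i, r i ∘ₗ s i = LinearMap.id := by
      rw [← h_sum, ← Fin.sum_univ_getElem l]
      exact Finset.sum_congr rfl fun i _ => hrs i
    refine ⟨l.length, Y, hY, ∑ i, DirectSum.lof A _ (fun i => Y i) i ∘ₗ s i,
      DirectSum.toModule A _ M r, ?_⟩
    ext x
    simpa using LinearMap.congr_fun h_id x

theorem IsSummand.inAddOf (h : IsSummand M N) (hN : X N) : InAddOf X M := by
  obtain ⟨s, r, hrs⟩ := h
  exact inAddOf_iff.2 (hrs ▸ comp_mem_factorsThroughAdd hN s r)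

theorem InAddOf.trans (h : InAddOf X M) (hX : ∀ N, X N → InAddOf Z N) : InAddOf Z M := by
  refine inAddOf_iff.2 ((AddSubmonoid.closure_le.2 ?_) (inAddOf_iff.1 h))
  rintro _ ⟨Y, hY, s, r, rfl⟩
  exact comp_comp_mem_factorsThroughAdd s r (inAddOf_iff.1 (hX Y hY))

theorem IsSummand.inAddOf_of_inAddOf (h : IsSummand M N) (hN : InAddOf X N) : InAddOf X M :=
  (h.inAddOf (X := (· = N)) rfl).trans (by rintro _ rfl; exact hN)

theorem inAddOf_eq_iff_of_equiv_directSum {κ : Type*} [Finite κ] {Y : κ → ModuleCat.{u} A}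
    (e : N ≃ₗ[A] DirectSum κ fun k => Y k) :
    InAddOf (· = N) M ↔ InAddOf (· ∈ Set.range Y) M := by
  classical
  constructor <;> refine fun h => h.trans ?_
  · rintro _ rfl
    exact inAddOf_iff.2 (id_mem_factorsThroughAdd_of_directSum (fun k => ⟨k, rfl⟩) e.symm_comp)
  · rintro _ ⟨k, rfl⟩
    have h_summand : IsSummand (Y k) N := by
      refine ⟨e.symm.toLinearMap ∘ₗ DirectSum.lof A κ (fun k => Y k) k,
        DirectSum.component A κ (fun k => Y k) k ∘ₗ e.toLinearMap, ?_⟩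
      ext x
      simp [DirectSum.component.lof_self]
    exact h_summand.inAddOf rfl

theorem inAddOf_pi {κ : Type} [Finite κ] {Y : κ → ModuleCat.{u} A} (hY : ∀ k, X (Y k)) :
    InAddOf X (ModuleCat.of A (∀ k, Y k)) := by
  have := Fintype.ofFinite κ
  exact inAddOf_iff.2 (id_mem_factorsThroughAdd_of_directSum hY
    (DirectSum.linearEquivFunOnFintype A κ fun k => Y k).comp_symm)

end AdditiveClosure

section KrullSchmidt

variable {A : Type u} [Ring A] {X : ModuleCat.{u} A → Prop} {M N : ModuleCat.{u} A}

theorem IsSummand.trans {K : ModuleCat.{u} A} (h : IsSummand M N) (h' : IsSummand N K) :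
    IsSummand M K := by
  rw [isSummand_iff_nonempty_retract] at *
  exact h.map2 (fun ρ ρ' => ρ.trans ρ') h'

theorem isSummand_of_isCompl {P Q : Submodule A M} (h : IsCompl P Q) :
    IsSummand (ModuleCat.of A P) M :=
  ⟨P.subtype, P.projectionOnto Q h, LinearMap.ext (Submodule.projectionOnto_apply_left h)⟩

theorem inAddOf_of_isCompl {P Q : Submodule A M} (h : IsCompl P Q)
    (hP : InAddOf X (ModuleCat.of A P)) (hQ : InAddOf X (ModuleCat.of A Q)) : InAddOf X M := by
  have h_id : P.subtype ∘ₗ LinearMap.id ∘ₗ P.projectionOnto Q h +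
      Q.subtype ∘ₗ LinearMap.id ∘ₗ Q.projectionOnto P h.symm = LinearMap.id := by
    ext x
    exact Submodule.projection_add_projection_eq_self h x
  rw [inAddOf_iff] at *
  exact h_id ▸ add_mem (comp_comp_mem_factorsThroughAdd _ _ hP)
    (comp_comp_mem_factorsThroughAdd _ _ hQ)

theorem exists_isCompl_of_not_indec (hM : ¬ Indec M) [Nontrivial M] :
    ∃ P Q : Submodule A M, IsCompl P Q ∧ P ≠ ⊤ ∧ Q ≠ ⊤ := by
  obtain ⟨e, he, he0, he1⟩ : ∃ e : M →ₗ[A] M, e ∘ₗ e = e ∧ e ≠ 0 ∧ e ≠ LinearMap.id := by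
    simpa [Indec, not_subsingleton M] using hM
  have he' : IsIdempotentElem (e : Module.End A M) := he
  refine ⟨e.range, e.ker, LinearMap.IsIdempotentElem.isCompl he', fun h => he1 ?_, fun h => he0 ?_⟩
  · refine LinearMap.ext fun x => ?_
    obtain ⟨y, rfl⟩ := LinearMap.range_eq_top.1 h x
    exact LinearMap.congr_fun he y
  · exact LinearMap.ker_eq_top.1 h

theorem inAddOf_indec_isSummand [IsArtinian A M] [IsNoetherian A M] :
    InAddOf (fun Y => Indec Y ∧ IsSummand Y M) M := by
  induction h : Module.length A M using WellFoundedLT.induction generalizing M with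
  | ind l ih =>
    subst h
    cases subsingleton_or_nontrivial M with
    | inl _ =>
      exact inAddOf_iff.2 (Subsingleton.elim 0 (LinearMap.id : M →ₗ[A] M) ▸ zero_mem _)
    | inr _ =>
      by_cases hM : Indec M
      · exact (IsSummand.of_equiv (.refl A M)).inAddOf ⟨hM, .of_equiv (.refl A M)⟩
      have h_proper {P Q : Submodule A M} (hPQ : IsCompl P Q) (hP : P ≠ ⊤) :
          InAddOf (fun Y => Indec Y ∧ IsSummand Y M) (ModuleCat.of A P) :=
        (ih _ (Submodule.length_lt hP) rfl).trans fun N hN =>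
          (IsSummand.of_equiv (.refl A N)).inAddOf
            ⟨hN.1, hN.2.trans (isSummand_of_isCompl hPQ)⟩
      obtain ⟨P, Q, hPQ, hP, hQ⟩ := exists_isCompl_of_not_indec hM
      exact inAddOf_of_isCompl hPQ (h_proper hPQ hP) (h_proper hPQ.symm hQ)

theorem Indec.isLocalRing (hM : Indec M) [IsArtinian A M] [IsNoetherian A M] :
    IsLocalRing (Module.End A M) := by
  have := not_subsingleton_iff_nontrivial.1 hM.1
  refine .of_isUnit_or_isUnit_one_sub_self fun a => ?_
  obtain ⟨m, hm, hm_pos⟩ :=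
    (a.eventually_isCompl_ker_pow_range_pow.and (Filter.eventually_gt_atTop 0)).exists
  have h_ker : (a ^ m).ker = ⊥ ∨ (a ^ m).ker = ⊤ := by
    rw [← Submodule.ker_projection hm.symm]
    refine (hM.2 _ (Submodule.isIdempotentElem_projection hm.symm)).symm.imp ?_ ?_ <;> intro h
    · rw [h, LinearMap.ker_id]
    · rw [h, LinearMap.ker_zero]
  refine h_ker.imp (fun h => ?_) fun h => ?_
  · refine (isUnit_pow_iff hm_pos.ne').1 ((Module.End.isUnit_iff _).2
      ⟨LinearMap.ker_eq_bot.1 h, LinearMap.range_eq_top.1 ?_⟩)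
    simpa [h] using hm.sup_eq_top
  · exact IsNilpotent.isUnit_one_sub ⟨m, LinearMap.ker_eq_top.1 h⟩

theorem InAddOf.exists_isSummand [IsLocalRing (Module.End A M)] (h : InAddOf X M) :
    ∃ Y, X Y ∧ IsSummand M Y := by
  obtain ⟨φ, ⟨Y, hY, s, r, rfl⟩, h_unit⟩ : ∃ φ ∈ {φ : Module.End A M | ∃ Y, X Y ∧
      ∃ (s : M →ₗ[A] Y) (r : Y →ₗ[A] M), r ∘ₗ s = φ}, IsUnit φ := by
    by_contra! h_nonunits
    exact AddSubmonoid.closure_le (S := IsLocalRing.nonunitsAddSubmonoid (Module.End A M)).2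
      h_nonunits (inAddOf_iff.1 h) isUnit_one
  obtain ⟨u, hu⟩ := h_unit.exists_left_inv
  exact ⟨Y, hY, s, u ∘ₗ r, hu⟩

theorem IsSummand.nonempty_linearEquiv (h : IsSummand M N) [Nontrivial M] (hN : Indec N) :
    Nonempty (M ≃ₗ[A] N) := by
  obtain ⟨s, r, hrs⟩ := h
  have h_idem : (s ∘ₗ r) ∘ₗ s ∘ₗ r = s ∘ₗ r := by
    rw [LinearMap.comp_assoc, ← LinearMap.comp_assoc r, hrs, LinearMap.id_comp]
  refine ⟨.ofLinearMap s r ((hN.2 _ h_idem).resolve_left fun h_zero => ?_) hrs⟩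
  refine one_ne_zero (α := Module.End A M) ?_
  calc LinearMap.id = (r ∘ₗ s) ∘ₗ r ∘ₗ s := by rw [hrs, LinearMap.id_comp]
    _ = r ∘ₗ (s ∘ₗ r) ∘ₗ s := rfl
    _ = 0 := by rw [h_zero, LinearMap.zero_comp, LinearMap.comp_zero]

theorem InAddOf.exists_linearEquiv [IsArtinian A M] [IsNoetherian A M] (h : InAddOf X M)
    (hM : Indec M) (hX : ∀ Y, X Y → Indec Y) : ∃ Y, X Y ∧ Nonempty (M ≃ₗ[A] Y) := by
  have := hM.isLocalRing
  have := not_subsingleton_iff_nontrivial.1 hM.1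
  obtain ⟨Y, hY, hMY⟩ := h.exists_isSummand
  exact ⟨Y, hY, hMY.nonempty_linearEquiv (hX Y hY)⟩

theorem finite_of_indec_inAddOf [IsArtinianRing A] [Module.Finite A N] {ι : Type*}
    {F : ι → ModuleCat.{u} A} [∀ i, Module.Finite A (F i)] (h_indec : ∀ i, Indec (F i))
    (h_inj : ∀ i j, Nonempty (F i ≃ₗ[A] F j) → i = j) (hN : ∀ i, InAddOf (· = N) (F i)) :
    Finite ι := by
  obtain ⟨k, Y, hY, s, r, hrs⟩ := inAddOf_indec_isSummand (M := N)
  have h_add (i : ι) : InAddOf (· ∈ Set.range Y) (F i) := (hN i).trans <| by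
    rintro _ rfl
    exact inAddOf_iff.2 (id_mem_factorsThroughAdd_of_directSum Set.mem_range_self hrs)
  have h_equiv (i : ι) : ∃ l, Nonempty (F i ≃ₗ[A] Y l) := by
    obtain ⟨_, ⟨l, rfl⟩, e⟩ :=
      (h_add i).exists_linearEquiv (h_indec i) (Set.forall_mem_range.2 fun l => (hY l).1)
    exact ⟨l, e⟩
  choose l e using h_equiv
  exact .of_injective l fun i j hij => h_inj i j ⟨(e i).some.trans (hij ▸ (e j).some.symm)⟩

end KrullSchmidt

section EssentialExtension

/-- `e` is an essential extension of `x` in a lattice (of submodules): `x ≤ e`, and every nonzero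
`n ≤ e` meets `x`. -/
def IsEssentialExtension {α : Type*} [Lattice α] [OrderBot α] (x e : α) : Prop :=
  x ≤ e ∧ ∀ n ≤ e, Disjoint n x → n = ⊥

theorem IsEssentialExtension.trans {α : Type*} [Lattice α] [OrderBot α] {x e d : α}
    (h : IsEssentialExtension x e) (h' : IsEssentialExtension e d) : IsEssentialExtension x d := by
  refine ⟨h.1.trans h'.1, fun n hn hnx => h'.2 n hn (disjoint_iff.2 (h.2 _ inf_le_right ?_))⟩
  exact hnx.mono_left inf_le_left

variable {α : Type*} [CompleteLattice α] [IsCompactlyGenerated α]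

theorem exists_maximal_disjoint (x : α) : ∃ c, Maximal (Disjoint x) c :=
  zorn_le₀ {c | Disjoint x c} fun s hs h_chain =>
    ⟨sSup s, h_chain.directedOn.disjoint_sSup_right.2 hs, fun _ => le_sSup⟩

theorem exists_maximal_isEssentialExtension (x : α) :
    ∃ e, Maximal (IsEssentialExtension x) e := by
  have h_refl : IsEssentialExtension x x :=
    ⟨le_rfl, fun n hn hnx => hnx.eq_bot_of_le hn⟩
  refine (zorn_le_nonempty₀ {e | IsEssentialExtension x e} (fun s hs h_chain y hy => ⟨sSup s,
    ⟨(hs hy).1.trans (le_sSup hy), fun n hn hnx => ?_⟩, fun _ => le_sSup⟩) x h_refl).imp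
    fun _ he => he.2
  rw [← inf_eq_left.2 hn, h_chain.directedOn.inf_sSup_eq, iSup₂_eq_bot]
  exact fun e he => (hs he).2 _ inf_le_right (hnx.mono_left inf_le_left)

end EssentialExtension

section EssentialSubmodule

variable {A Q : Type*} [Ring A] [AddCommGroup Q] [Module A Q] {X E N : Submodule A Q}

theorem isEssentialExtension_range {C : Submodule A Q} (hC : Maximal (Disjoint E) C)
    {p : Q →ₗ[A] Q} (hpE : ∀ x ∈ E, p x = x) (hpC : C ≤ p.ker) :
    IsEssentialExtension E p.range := by
  refine ⟨fun x hx => ⟨x, hpE x hx⟩, fun N hN hNE => ?_⟩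
  have h_disj : Disjoint E (N.comap p) := Submodule.disjoint_def.2 fun x hxE hxN =>
    Submodule.disjoint_def.1 hNE x (by simpa [hpE x hxE] using hxN) hxE
  have hNC : N.comap p ≤ C :=
    hC.2 h_disj (hpC.trans (LinearMap.ker_le_comap p))
  rw [← Submodule.map_comap_eq_of_le hN, ← le_bot_iff]
  exact Submodule.map_le_iff_le_comap.2 (hNC.trans hpC)

theorem exists_projection_of_maximal_isEssentialExtension [Module.Injective A Q]
    (hE : Maximal (IsEssentialExtension X) E) :
    ∃ p : Q →ₗ[A] E, p ∘ₗ E.subtype = LinearMap.id := by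
  obtain ⟨C, hC⟩ := exists_maximal_disjoint E
  have h_inj : Function.Injective (C.mkQ ∘ₗ E.subtype) := by
    rw [← LinearMap.ker_eq_bot, LinearMap.ker_comp, Submodule.ker_mkQ,
      ← Submodule.disjoint_iff_comap_eq_bot]
    exact hC.1
  obtain ⟨g, hg⟩ := Module.Injective.out _ h_inj E.subtype
  have h_ess := isEssentialExtension_range hC (p := g ∘ₗ C.mkQ) (fun x hx => hg ⟨x, hx⟩)
    (C.ker_mkQ.symm.le.trans (LinearMap.ker_le_ker_comp _ _))
  have h_range : (g ∘ₗ C.mkQ).range ≤ E := hE.2 (hE.1.trans h_ess) h_ess.1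
  exact ⟨(g ∘ₗ C.mkQ).codRestrict E fun x => h_range ⟨x, rfl⟩,
    LinearMap.ext fun x => Subtype.ext (hg x)⟩

theorem IsEssentialExtension.le_of_isSemisimpleModule (hE : IsEssentialExtension X E) (hN : N ≤ E)
    [IsSemisimpleModule A N] : N ≤ X := by
  obtain ⟨C, hC⟩ := exists_isCompl (X.comap N.subtype)
  have h_disj : Disjoint (C.map N.subtype) X := by
    rw [disjoint_comm, Submodule.disjoint_def]
    rintro _ hxX ⟨x, hxC, rfl⟩
    rw [Submodule.disjoint_def.1 hC.disjoint x hxX hxC, map_zero]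
  have hC_bot : C = ⊥ := Submodule.map_injective_of_injective N.subtype_injective <|
    (hE.2 _ ((Submodule.map_subtype_le N C).trans hN) h_disj).trans (Submodule.map_bot _).symm
  rw [← Submodule.comap_subtype_eq_top, ← hC.sup_eq_top, hC_bot, sup_bot_eq]

theorem IsEssentialExtension.mem_of_jacobson_smul_eq_zero [IsSemiprimaryRing A]
    (hE : IsEssentialExtension X E) {x : Q} (hx : x ∈ E)
    (h_smul : ∀ a ∈ Ring.jacobson A, a • x = 0) : x ∈ X := by
  let N := Submodule.span A {x}
  have h_torsion : Module.IsTorsionBySet A N (Ring.jacobson A) := by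
    rintro ⟨y, hy⟩ a
    obtain ⟨c, rfl⟩ := Submodule.mem_span_singleton.1 hy
    exact Subtype.ext ((smul_smul _ _ _).trans (h_smul _ (Ideal.mul_mem_right c _ a.2)))
  let _ := h_torsion.module
  have : IsSemisimpleModule A N :=
    (h_torsion.semilinearMap.isSemisimpleModule_iff_of_bijective Function.bijective_id).2
      inferInstance
  exact hE.le_of_isSemisimpleModule ((Submodule.span_singleton_le_iff_mem x E).2 hx)
    (Submodule.mem_span_singleton_self x)

end EssentialSubmodule

section FiniteGeneration

theorem isNoetherian_comap {R M N : Type*} [Ring R] [AddCommGroup M] [Module R M] [AddCommGroup N]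
    [Module R N] (f : M →ₗ[R] N) (K : Submodule R N) [IsNoetherian R f.ker] [IsNoetherian R K] :
    IsNoetherian R (K.comap f) := by
  refine isNoetherian_of_range_eq_ker (Submodule.inclusion (LinearMap.ker_le_comap f))
    (f.restrict fun x hx => hx : K.comap f →ₗ[R] K) ?_
  rw [Submodule.range_inclusion, LinearMap.ker_restrict]
variable (R : Type*) {A : Type*} [CommRing R] [Ring A] [Algebra R A] (J : Ideal A)
  (M : Type*) [AddCommGroup M] [Module A M] [Module R M] [IsScalarTower R A M]

/-- The map sending `x : M` to the multiplication map `a ↦ a • x` on the left ideal `J`. Its kernel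
is the set of elements of `M` annihilated by `J`, seen as an `R`-submodule because `J` need not be
two-sided. -/
def idealSMul : M →ₗ[R] J.restrictScalars R →ₗ[R] M :=
  ((Algebra.lsmul R R M).toLinearMap.domRestrict (J.restrictScalars R)).flip

variable {R J M}

theorem mem_ker_idealSMul {x : M} : x ∈ (idealSMul R J M).ker ↔ ∀ a ∈ J, a • x = 0 := by
  simp [LinearMap.ext_iff, idealSMul]

variable [IsNoetherianRing R] [Module.Finite R A]

theorem isNoetherian_ker_idealSMul_pow [IsNoetherian R (idealSMul R J M).ker] (k : ℕ) :
    IsNoetherian R (idealSMul R (J ^ k) M).ker := by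
  induction k with
  | zero =>
    have h_bot : (idealSMul R (J ^ 0) M).ker = ⊥ := by
      refine (Submodule.eq_bot_iff _).2 fun x hx => ?_
      simpa using mem_ker_idealSMul.1 hx 1 (by simp [Submodule.pow_zero])
    rw [h_bot]
    infer_instance
  | succ k ih =>
    -- For `x` annihilated by `J ^ (k + 1)`, multiplication `a ↦ a • x` maps `J` into `K`.
    let K := (idealSMul R (J ^ k) M).ker
    let maps_to_K := (LinearMap.compRight R (M := J.restrictScalars R) K.subtype).range
    have h_le : (idealSMul R (J ^ (k + 1)) M).ker ≤ maps_to_K.comap (idealSMul R J M) := by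
      refine fun x hx => ⟨(idealSMul R J M x).codRestrict K fun b => ?_, rfl⟩
      refine mem_ker_idealSMul.2 fun a ha => (smul_smul a (b : A) x).trans ?_
      exact mem_ker_idealSMul.1 hx _ (J.pow_succ ▸ Ideal.mul_mem_mul ha b.2)
    have := isNoetherian_comap (idealSMul R J M) maps_to_K
    exact isNoetherian_of_le h_le

theorem isNoetherian_of_isNilpotent (hJ : IsNilpotent J) [IsNoetherian R (idealSMul R J M).ker] :
    IsNoetherian R M := by
  obtain ⟨k, hk⟩ := hJ
  have h_top : (idealSMul R (J ^ k) M).ker = ⊤ := by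
    refine Submodule.eq_top_iff'.2 fun x => mem_ker_idealSMul.2 fun a ha => ?_
    rw [hk, Submodule.zero_eq_bot, Submodule.mem_bot] at ha
    rw [ha, zero_smul]
  have := isNoetherian_ker_idealSMul_pow (J := J) (M := M) (R := R) k
  rw [h_top] at this
  exact isNoetherian_top_iff.1 this

end FiniteGeneration

section ArtinAlgebra

variable (R : Type*) [CommRing R] [IsArtinianRing R]

theorem IsEssentialExtension.finite {A Q : Type*} [Ring A] [Algebra R A] [Module.Finite R A]
    [AddCommGroup Q] [Module A Q] {X E : Submodule A Q} (hE : IsEssentialExtension X E)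
    [Module.Finite A X] : Module.Finite A E := by
  have : IsArtinianRing A := .of_finite R A
  let _ : Module R Q := Module.compHom Q (algebraMap R A)
  have : IsScalarTower R A Q := .of_compHom ..
  have : Module.Finite R X := .trans A X
  have h_le : (idealSMul R (Ring.jacobson A) E).ker ≤
      (X.comap E.subtype).restrictScalars R := fun x hx =>
    hE.mem_of_jacobson_smul_eq_zero x.2 fun a ha =>
      congrArg Subtype.val (mem_ker_idealSMul.1 hx a ha)
  have : IsNoetherian R ((X.comap E.subtype).restrictScalars R) :=
    isNoetherian_of_linearEquiv
      ((Submodule.comapSubtypeEquivOfLe hE.1).symm.restrictScalars R)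
  have := isNoetherian_of_le h_le
  have : IsNoetherian R E := isNoetherian_of_isNilpotent (IsSemiprimaryRing.isNilpotent (R := A))
  exact .of_restrictScalars_finite R A E

theorem exists_finite_injective_embedding {A : Type u} [Ring A] [Algebra R A] [Module.Finite R A]
    (M : ModuleCat.{u} A) [Module.Finite A M] :
    ∃ (Q : ModuleCat.{u} A) (i : M →ₗ[A] Q), Module.Finite A Q ∧ Module.Injective A Q ∧
      Function.Injective i := by
  let I := Injective.under M
  let i : M →ₗ[A] I := (Injective.ι M).hom
  have hi : Function.Injective i := (ModuleCat.mono_iff_injective _).1 inferInstance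
  have : Module.Injective A I :=
    (Module.injective_iff_injective_object A I).2 (Injective.injective_under M)
  obtain ⟨E, hE⟩ := exists_maximal_isEssentialExtension i.range
  have h_summand : IsSummand (ModuleCat.of A E) I :=
    ⟨E.subtype, exists_projection_of_maximal_isEssentialExtension hE⟩
  exact ⟨ModuleCat.of A E, i.codRestrict E fun x => hE.1.1 ⟨x, rfl⟩, hE.1.finite R,
    h_summand.injective, (LinearMap.injective_codRestrict_iff ..).2 hi⟩

end ArtinAlgebra

section ExtInjectiveFamilies

variable {A : Type u} [Ring A]

theorem exists_injective_of_inAddOf {ι : Type*} {X : ModuleCat.{u} A → Prop}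
    {I B : ι → ModuleCat.{u} A} {M Q : ModuleCat.{u} A} (hM : X M)
    (hQ : InAddOf (· ∈ Set.range I) Q) {i : M →ₗ[A] Q} (hi : Function.Injective i)
    {f : ∀ j, B j →ₗ[A] I j} (hf : ∀ j, IsRightApprox X (f j)) :
    ∃ (k : ℕ) (σ : Fin k → ι) (g : M →ₗ[A] ∀ l, B (σ l)), Function.Injective g := by
  obtain ⟨k, Y, hY, s, r, hrs⟩ := hQ
  choose σ hσ using hY
  obtain rfl : (fun l => I (σ l)) = Y := funext hσ
  choose g hg using fun l =>
    (hf (σ l)).2 M hM (DirectSum.component A _ (fun l => I (σ l)) l ∘ₗ s ∘ₗ i)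
  let e := DirectSum.linearEquivFunOnFintype A (Fin k) fun l => I (σ l)
  have h_comp : (fun y l => f (σ l) (y l)) ∘ LinearMap.pi g = e ∘ s ∘ i :=
    funext fun x => funext fun l => LinearMap.congr_fun (hg l) x
  have h_inj : Function.Injective ((fun y l => f (σ l) (y l)) ∘ LinearMap.pi g) := by
    rw [h_comp]
    exact e.injective.comp ((LinearMap.injective_of_comp_eq_id _ _ hrs).comp hi)
  exact ⟨k, σ, LinearMap.pi g, h_inj.of_comp⟩

variable {n : ℕ} {I B : Fin n → ModuleCat.{u} A}

theorem IsCompleteIndecInjFamily.inAddOf [IsArtinianRing A] (hI : IsCompleteIndecInjFamily I)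
    (Q : ModuleCat.{u} A) [Module.Finite A Q] [Module.Injective A Q] :
    InAddOf (· ∈ Set.range I) Q := by
  refine inAddOf_indec_isSummand.trans fun Y hY => ?_
  obtain ⟨j, e⟩ := hI.2.1 Y hY.2.finite hY.2.injective hY.1
  exact (IsSummand.of_equiv e.some).inAddOf ⟨j, rfl⟩

theorem ExtInjInP.inAddOf (R : Type*) [CommRing R] [IsArtinianRing R] [Algebra R A]
    [Module.Finite R A] (hI : IsCompleteIndecInjFamily I) {f : ∀ j, B j →ₗ[A] I j}
    (hf : ∀ j, IsRightApprox InP (f j)) {M : ModuleCat.{u} A} (hM : ExtInjInP M) :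
    InAddOf (· ∈ Set.range B) M := by
  have : IsArtinianRing A := .of_finite R A
  have := hM.1.1
  obtain ⟨Q, i, _, _, hi⟩ := exists_finite_injective_embedding R M
  obtain ⟨k, σ, g, hg⟩ := exists_injective_of_inAddOf hM.1 (hI.inAddOf Q) hi hf
  have h_split : IsSummand M (ModuleCat.of A (∀ l, B (σ l))) :=
    ⟨g, (extInjInP_iff.1 hM).2 _ (.pi fun l => (hf (σ l)).1) g hg⟩
  exact h_split.inAddOf_of_inAddOf (inAddOf_pi fun l => ⟨σ l, rfl⟩)

theorem IsCompleteExtInjFamily.inAddOf [IsArtinianRing A] {ι : Type u} {F : ι → ModuleCat.{u} A}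
    (hF : IsCompleteExtInjFamily F) {M : ModuleCat.{u} A} (hM : ExtInjInP M) :
    InAddOf (· ∈ Set.range F) M := by
  have := hM.1.1
  refine inAddOf_indec_isSummand.trans fun Y hY => ?_
  obtain ⟨i, e⟩ := hF.2.1 Y hY.1 (hY.2.extInjInP hM)
  exact (IsSummand.of_equiv e.some).inAddOf ⟨i, rfl⟩

theorem IsCompleteExtInjFamily.finite [IsArtinianRing A] {ι : Type u} {F : ι → ModuleCat.{u} A}
    (hF : IsCompleteExtInjFamily F) [∀ j, Module.Finite A (B j)]
    (hFB : ∀ i, InAddOf (· ∈ Set.range B) (F i)) : Finite ι := by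
  have (i : ι) : Module.Finite A (F i) := (hF.1 i).2.1.1
  exact finite_of_indec_inAddOf (N := ModuleCat.of A (DirectSum (Fin n) fun j => B j))
    (fun i => (hF.1 i).1) hF.2.2
    fun i => (inAddOf_eq_iff_of_equiv_directSum (.refl A _)).2 (hFB i)

end ExtInjectiveFamilies

theorem stmt_14_general {Λ : Type u} [Ring Λ] (R : Type*) [CommRing R] [IsArtinianRing R]
    [Algebra R Λ] [Module.Finite R Λ] {ι : Type u} {F : ι → ModuleCat.{u} Λ}
    (hF : IsCompleteExtInjFamily F) {n : ℕ} {I : Fin n → ModuleCat.{u} Λ}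
    (hI : IsCompleteIndecInjFamily I) {A : Fin n → ModuleCat.{u} Λ} {f : ∀ j, A j →ₗ[Λ] I j}
    (hf : ∀ j, IsMinimalRightApprox InP (f j)) (M : ModuleCat.{u} Λ) :
    InAddOf (· = ModuleCat.of Λ (DirectSum ι fun i => F i)) M ↔
      InAddOf (· = ModuleCat.of Λ (DirectSum (Fin n) fun j => A j)) M := by
  have : IsArtinianRing Λ := .of_finite R Λ
  have hA (j : Fin n) : ExtInjInP (A j) :=
    have := (hI.1 j).2.1
    (hf j).extInjInP
  have hFA (i : ι) : InAddOf (· ∈ Set.range A) (F i) := (hF.1 i).2.inAddOf R hI fun j => (hf j).1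
  have hAF (j : Fin n) : InAddOf (· ∈ Set.range F) (A j) := hF.inAddOf (hA j)
  have (j : Fin n) : Module.Finite Λ (A j) := (hA j).1.1
  have : Finite ι := hF.finite hFA
  rw [inAddOf_eq_iff_of_equiv_directSum (.refl Λ _),
    inAddOf_eq_iff_of_equiv_directSum (.refl Λ _)]
  exact ⟨fun h => h.trans (Set.forall_mem_range.2 hFA),
    fun h => h.trans (Set.forall_mem_range.2 hAF)⟩

/-- If `𝒫` is contravariantly finite, then the direct sum `E` of the
indecomposable Ext-injective modules in `𝒫` satisfies `add E = add (⊕ⱼ Aⱼ)`, where the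
`Aⱼ → Iⱼ` are the minimal right `𝒫`-approximations of the indecomposable injectives. -/
theorem stmt_14 (Λ : Type u) [Ring Λ] (R : Type u) [CommRing R] [IsArtinianRing R]
    [Algebra R Λ] [Module.Finite R Λ]
    (hcf : ContravariantlyFinite (fun M : ModuleCat.{u} Λᵐᵒᵖ => InP M))
    {ι : Type u} (F : ι → ModuleCat.{u} Λᵐᵒᵖ) (hF : IsCompleteExtInjFamily F)
    {n : ℕ} (I : Fin n → ModuleCat.{u} Λᵐᵒᵖ) (hI : IsCompleteIndecInjFamily I)
    (A : Fin n → ModuleCat.{u} Λᵐᵒᵖ) (f : ∀ j, A j →ₗ[Λᵐᵒᵖ] I j)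
    (hf : ∀ j, IsMinimalRightApprox InP (f j)) :
    ∀ M : ModuleCat.{u} Λᵐᵒᵖ,
      InAddOf (fun Y => Y = ModuleCat.of Λᵐᵒᵖ (DirectSum ι (fun i => ↥(F i)))) M ↔
      InAddOf (fun Y => Y = ModuleCat.of Λᵐᵒᵖ (DirectSum (Fin n) (fun j => ↥(A j)))) M := by
  have : Module.Finite R Λᵐᵒᵖ := .equiv (MulOpposite.opLinearEquiv R : Λ ≃ₗ[R] Λᵐᵒᵖ)
  exact stmt_14_general R hF hI hf
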